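/- arXiv:1604.04809 — 2 statements merged into one kernel-verified Lean document; each statement's English description precedes it below -/
import Mathlib

section
/- There is a constant c (independent of the game) such that every coordination game with arbitrary bonuses on an unweighted partition-cycle on n nodes with top part of size k admits, from every joint strategy, a finite improvement path of length at most c·k·n·(n−k) (hence ending in a Nash equilibrium). -/
/-!
Let the nodes move in the order `1, …, n` over and over again, each to a best response, where a
node prefers staying to copying its cyclic predecessor, and copying to any other move. Call the
bonus of a colour its own bonus plus the contribution of the cross-edges. Bonuses are integers and
the cycle edge is worth only `1`, so a node that moves lands on a colour of maximal bonus, and if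
its old colour already had maximal bonus, then the move copies the predecessor. Once a sweep leaves
the last node unchanged, it has reached a Nash equilibrium.

No cross-edge enters a top node, so the set of top nodes whose colour has submaximal bonus never
grows. In a sweep that leaves this set unchanged, a top node moves only by copying a predecessor
that has moved as well, so it adopts the old colour `w` of the last node. At the bottom nodes `w`
then gains bonus while all other colours lose. Consider the final block of nodes that play `w`
with maximal bonus: `w` stays maximal for them, so they move only by copying. As the last node
moves, so does the whole block, and so does the node before the block, since otherwise the first
block node, which was settled, would have had no reason to move. That node is a bottom node because
it does not move to `w`, so the uniform block grows by one node within the bottom part. Thus at most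
`n - k` sweeps pass between two of the at most `k` shrinkings of the set.
-/

open scoped Classical

namespace CG

/-- Payoff of node `i` in a coordination game on a weighted directed graph
with adjacency `adj` (an edge `j → i` is `adj j i`), edge weights `w`,
bonuses `β`, under the joint strategy `s`. -/
noncomputable def payoff {V M : Type} [Fintype V] (adj : V → V → Prop)
    (w : V → V → ℝ) (β : V → M → ℕ) (s : V → M) (i : V) : ℝ :=
  (∑ j ∈ Finset.univ.filter (fun j => adj j i ∧ s j = s i), w j i) + (β i (s i) : ℝ)

/-- A joint strategy assigns to every node a colour from its colour set. -/
def Valid {V M : Type} (C : V → Finset M) (s : V → M) : Prop :=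
  ∀ i, s i ∈ C i

/-- `s'` is a profitable deviation of the (non-empty) coalition
`K = {i | s i ≠ s' i}` from `s`. -/
def ProfDev {V M : Type} [Fintype V] (adj : V → V → Prop) (w : V → V → ℝ)
    (β : V → M → ℕ) (C : V → Finset M) (s s' : V → M) : Prop :=
  Valid C s' ∧ s ≠ s' ∧
    ∀ i, s i ≠ s' i → payoff adj w β s i < payoff adj w β s' i

/-- A profitable deviation of a single player. -/
def UniDev {V M : Type} [Fintype V] (adj : V → V → Prop) (w : V → V → ℝ)
    (β : V → M → ℕ) (C : V → Finset M) (s s' : V → M) : Prop :=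
  ProfDev adj w β C s s' ∧ ∃ i, ∀ j, j ≠ i → s j = s' j

/-- A Nash equilibrium: no single player has a profitable deviation. -/
def IsNash {V M : Type} [Fintype V] (adj : V → V → Prop) (w : V → V → ℝ)
    (β : V → M → ℕ) (C : V → Finset M) (s : V → M) : Prop :=
  Valid C s ∧ ∀ s', ¬ UniDev adj w β C s s'

/-- A strong equilibrium: no coalition has a profitable deviation. -/
def IsStrong {V M : Type} [Fintype V] (adj : V → V → Prop) (w : V → V → ℝ)
    (β : V → M → ℕ) (C : V → Finset M) (s : V → M) : Prop :=
  Valid C s ∧ ∀ s', ¬ ProfDev adj w β C s s'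

/-- There is a finite improvement path of length `L` starting at `s`
(each step a profitable single-player deviation) ending in a Nash equilibrium. -/
def ImpPath {V M : Type} [Fintype V] (adj : V → V → Prop) (w : V → V → ℝ)
    (β : V → M → ℕ) (C : V → Finset M) (s : V → M) (L : ℕ) : Prop :=
  ∃ σ : ℕ → V → M, σ 0 = s ∧
    (∀ t, t < L → UniDev adj w β C (σ t) (σ (t + 1))) ∧
    IsNash adj w β C (σ L)

/-- There is a finite c-improvement path of length `L` starting at `s`
(each step a profitable coalition deviation) ending in a strong equilibrium. -/
def CImpPath {V M : Type} [Fintype V] (adj : V → V → Prop) (w : V → V → ℝ)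
    (β : V → M → ℕ) (C : V → Finset M) (s : V → M) (L : ℕ) : Prop :=
  ∃ σ : ℕ → V → M, σ 0 = s ∧
    (∀ t, t < L → ProfDev adj w β C (σ t) (σ (t + 1))) ∧
    IsStrong adj w β C (σ L)

/-- Adjacency of the simple cycle `1 → 2 → ⋯ → n → 1` on `Fin n`. -/
def cycAdj (n : ℕ) : Fin n → Fin n → Prop :=
  fun i j => (i.val + 1) % n = j.val

/-- Adjacency of a partition-cycle on `Fin n`: the cyclic edges
`i → i+1 (mod n)` together with the cross-edges `Ep`. -/
def pcAdj (n : ℕ) (Ep : Finset (Fin n × Fin n)) : Fin n → Fin n → Prop :=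
  fun i j => (i.val + 1) % n = j.val ∨ (i, j) ∈ Ep

/-- A partition-cycle on `Fin n` with top part `V_T = {i | i.val < k}`
(of size `k`, `1 ≤ k < n`) and bottom part `V_B = {i | k ≤ i.val}`:
the cross-edges `Ep` go from `V_T` to `V_B` and are not cyclic edges. -/
def IsPartitionCycle (n k : ℕ) (Ep : Finset (Fin n × Fin n)) : Prop :=
  1 ≤ k ∧ k < n ∧
  (∀ e ∈ Ep, e.1.val < k ∧ k ≤ e.2.val) ∧
  (∀ e ∈ Ep, (e.1.val + 1) % n ≠ e.2.val)

/-- `ReachesWithin r N a b`: some `r`-path of at most `N` steps leads from `a` to `b`.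
It is used to concatenate pieces of improvement paths while bounding the total length. -/
inductive ReachesWithin {α : Type*} (r : α → α → Prop) : ℕ → α → α → Prop
  | refl (N : ℕ) (a : α) : ReachesWithin r N a a
  | head {N : ℕ} {a b c : α} : r a b → ReachesWithin r N b c → ReachesWithin r (N + 1) a c

namespace ReachesWithin

variable {α : Type*} {r : α → α → Prop} {N N' : ℕ} {a b c : α}

theorem single (h : r a b) : ReachesWithin r 1 a b :=
  head h (refl 0 b)

theorem mono (h : ReachesWithin r N a b) (hN : N ≤ N') : ReachesWithin r N' a b := by
  induction h generalizing N' with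
  | refl => exact refl N' _
  | head hr _ ih =>
    obtain ⟨N', rfl⟩ := Nat.exists_eq_add_of_le' (Nat.one_le_of_lt hN)
    exact head hr (ih (Nat.le_of_succ_le_succ hN))

theorem trans (h : ReachesWithin r N a b) (h' : ReachesWithin r N' b c) :
    ReachesWithin r (N + N') a c := by
  induction h with
  | refl N => exact h'.mono (Nat.le_add_left N' N)
  | head hr _ ih => exact (head hr (ih h')).mono (Nat.succ_add _ _).ge

end ReachesWithin

theorem Valid.update {V M : Type} [DecidableEq V] {C : V → Finset M} {s : V → M} {i : V} {c : M}
    (hs : Valid C s) (hc : c ∈ C i) : Valid C (Function.update s i c) := by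
  intro j
  rcases eq_or_ne j i with rfl | hj
  · rwa [Function.update_self]
  · rw [Function.update_of_ne hj]
    exact hs j

section Deviations

variable {V M : Type} [Fintype V] {adj : V → V → Prop} {w : V → V → ℝ} {β : V → M → ℕ}
  {C : V → Finset M} {s s' : V → M}

theorem ReachesWithin.exists_impPath {N : ℕ} (h : ReachesWithin (UniDev adj w β C) N s s')
    (hs' : IsNash adj w β C s') : ∃ L ≤ N, ImpPath adj w β C s L := by
  induction h with
  | refl N s => exact ⟨0, N.zero_le, fun _ => s, rfl, fun t ht => absurd ht t.not_lt_zero, hs'⟩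
  | @head N s _ _ hdev _ ih =>
    obtain ⟨L, hL, σ, rfl, hσ, hnash⟩ := ih hs'
    refine ⟨L + 1, Nat.succ_le_succ hL, fun t => Nat.casesOn t s σ, rfl, fun t ht => ?_, hnash⟩
    cases t with
    | zero => exact hdev
    | succ t => exact hσ t (Nat.lt_of_succ_lt_succ ht)

variable [DecidableEq V] {i : V} {c : M}

theorem uniDev_update (hs : Valid C s) (hc : c ∈ C i)
    (hlt : payoff adj w β s i < payoff adj w β (Function.update s i c) i) :
    UniDev adj w β C s (Function.update s i c) := by
  have hoff (j : V) (hj : j ≠ i) : s j = Function.update s i c j :=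
    (Function.update_of_ne hj c s).symm
  refine ⟨⟨hs.update hc, fun h => hlt.ne (congrArg (payoff adj w β · i) h), fun j hj => ?_⟩,
    i, hoff⟩
  obtain rfl : j = i := by_contra fun hne => hj (hoff j hne)
  exact hlt

theorem isNash_of_payoff_update_le (hs : Valid C s)
    (h : ∀ i, ∀ c ∈ C i, payoff adj w β (Function.update s i c) i ≤ payoff adj w β s i) :
    IsNash adj w β C s := by
  refine ⟨hs, fun s' ⟨⟨hs', hne, himp⟩, i, hoff⟩ => ?_⟩
  have hs'_eq : s' = Function.update s i (s' i) :=
    Function.eq_update_iff.2 ⟨rfl, fun j hj => (hoff j hj).symm⟩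
  have hi : s i ≠ s' i := fun hi => hne (by rw [hs'_eq, ← hi, Function.update_eq_self])
  have hle := h i (s' i) (hs' i)
  rw [← hs'_eq] at hle
  exact (himp i hi).not_ge hle

end Deviations

section Sweeps

variable {n : ℕ} {M : Type*}

/-- The joint strategy at the moment when the sweep from `s` to `s'`, which updates the nodes
in increasing order, is about to update node `i`. -/
def sweepStage (s s' : Fin n → M) (i : Fin n) : Fin n → M :=
  fun j => if j < i then s' j else s j

theorem sweepStage_of_lt {s s' : Fin n → M} {i j : Fin n} (h : j < i) :
    sweepStage s s' i j = s' j :=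
  if_pos h

theorem sweepStage_of_le {s s' : Fin n → M} {i j : Fin n} (h : i ≤ j) :
    sweepStage s s' i j = s j :=
  if_neg h.not_gt

theorem sweepStage_update {s s' : Fin n → M} {i j : Fin n} (h : i ≤ j) (c : M) :
    sweepStage s (Function.update s' j c) i = sweepStage s s' i := by
  funext l
  by_cases hl : l < i
  · rw [sweepStage_of_lt hl, sweepStage_of_lt hl, Function.update_of_ne (hl.trans_le h).ne]
  · rw [sweepStage_of_le (not_lt.1 hl), sweepStage_of_le (not_lt.1 hl)]

theorem exists_sweep {r : (Fin n → M) → (Fin n → M) → Prop} {P : (Fin n → M) → Prop}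
    {U : (Fin n → M) → Fin n → M → Prop}
    (hU : ∀ s, P s → ∀ i, ∃ c, U s i c ∧ P (Function.update s i c) ∧
      (c ≠ s i → r s (Function.update s i c)))
    {s : Fin n → M} (hs : P s) :
    ∃ s', P s' ∧ ReachesWithin r n s s' ∧ ∀ i, U (sweepStage s s' i) i (s' i) := by
  suffices partialSweep : ∀ m ≤ n, ∃ s', P s' ∧ ReachesWithin r m s s' ∧
      (∀ j : Fin n, m ≤ j → s' j = s j) ∧
      ∀ i : Fin n, (i : ℕ) < m → U (sweepStage s s' i) i (s' i) by
    obtain ⟨s', hs', hreach, -, hU'⟩ := partialSweep n le_rfl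
    exact ⟨s', hs', hreach, fun i => hU' i i.isLt⟩
  intro m hm
  induction m with
  | zero => exact ⟨s, hs, .refl 0 s, fun _ _ => rfl, fun i hi => absurd hi i.val.not_lt_zero⟩
  | succ m ih =>
    obtain ⟨s', hs', hreach, hlater, hearlier⟩ := ih (Nat.le_of_succ_le hm)
    let a : Fin n := ⟨m, hm⟩
    obtain ⟨c, hc, hP, hstep⟩ := hU s' hs' a
    refine ⟨Function.update s' a c, hP, hreach.trans ?_, fun j hj => ?_, fun i hi => ?_⟩
    · by_cases hca : c = s' a
      · rw [hca, Function.update_eq_self]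
        exact .refl 1 s'
      · exact .single (hstep hca)
    · have hja : j ≠ a := fun h => by simp [h, a] at hj
      rw [Function.update_of_ne hja, hlater j (Nat.le_of_succ_le hj)]
    · rw [sweepStage_update (Fin.le_def.2 (Nat.le_of_lt_succ hi))]
      rcases eq_or_ne i a with rfl | hia
      · have hstage : sweepStage s s' a = s' := by
          funext j
          by_cases hj : j < a
          · exact sweepStage_of_lt hj
          · rw [sweepStage_of_le (not_lt.1 hj), hlater j (not_lt.1 hj)]
        rwa [hstage, Function.update_self]
      · rw [Function.update_of_ne hia]
        exact hearlier i (lt_of_le_of_ne (Nat.le_of_lt_succ hi) (Fin.val_ne_of_ne hia))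

end Sweeps

section LazyResponse

variable {M : Type*}

/-- The value of colour `c` to a node with bonus function `B` whose cyclic predecessor plays `p`. -/
noncomputable def colourValue (B : M → ℕ) (p c : M) : ℕ :=
  B c + if c = p then 1 else 0

theorem colourValue_self (B : M → ℕ) (p : M) : colourValue B p p = B p + 1 := by
  simp [colourValue]

theorem colourValue_of_ne (B : M → ℕ) {p c : M} (h : c ≠ p) : colourValue B p c = B c := by
  simp [colourValue, h]

theorem le_colourValue (B : M → ℕ) (p c : M) : B c ≤ colourValue B p c :=
  Nat.le_add_right _ _

theorem isMaxOn_colourValue_self {B : M → ℕ} {p : M} {A : Set M} (hp : IsMaxOn B A p) :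
    IsMaxOn (colourValue B p) A p := by
  refine isMaxOn_iff.2 fun c hc => ?_
  rcases eq_or_ne c p with rfl | hcp
  · exact le_rfl
  · rw [colourValue_of_ne B hcp]
    exact (hp hc).trans (le_colourValue B p p)

/-- A best response `y` of a node currently playing `x`, for the values `colourValue B p` of
the colours in `A`. Staying at `x` is preferred to moving to `p`, which is preferred to moving to
another colour. -/
structure IsLazyResponse (B : M → ℕ) (p : M) (A : Finset M) (x y : M) : Prop where
  mem : y ∈ A
  isMaxOn : IsMaxOn (colourValue B p) A y
  lt_of_ne : y ≠ x → colourValue B p x < colourValue B p y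
  isMaxOn_bonus_of_ne : y ≠ x → IsMaxOn B A y
  eq_pred_of_ne : y ≠ x → IsMaxOn B A x → y = p

theorem colourValue_le_of_isMaxOn {B : M → ℕ} {p a z : M} {A : Finset M} (ha : IsMaxOn B A a)
    (hp : ¬ (p ∈ A ∧ IsMaxOn B A p)) (hz : z ∈ A) : colourValue B p z ≤ B a := by
  rcases eq_or_ne z p with rfl | hzp
  · -- Bonuses are integers, so the extra `1` does not lift `p` above a colour of maximal bonus.
    have hlt : B z < B a := by
      by_contra! hle
      exact hp ⟨hz, fun c hc => (ha hc).trans hle⟩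
    rwa [colourValue_self, Nat.add_one_le_iff]
  · rw [colourValue_of_ne B hzp]
    exact ha hz

theorem exists_isLazyResponse (B : M → ℕ) (p : M) {A : Finset M} {x : M} (hx : x ∈ A) :
    ∃ y, IsLazyResponse B p A x y := by
  by_cases hbest : IsMaxOn (colourValue B p) A x
  · exact ⟨x, hx, hbest, absurd rfl, absurd rfl, absurd rfl⟩
  obtain ⟨z, hz, hlt⟩ : ∃ z ∈ A, colourValue B p x < colourValue B p z := by
    simpa [isMaxOn_iff] using hbest
  by_cases hp : p ∈ A ∧ IsMaxOn B A p
  · have hmax : IsMaxOn (colourValue B p) A p := isMaxOn_colourValue_self hp.2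
    exact ⟨p, hp.1, hmax, fun _ => hlt.trans_le (hmax hz), fun _ => hp.2, fun _ _ => rfl⟩
  · obtain ⟨a, haA, ha⟩ := A.exists_max_image B ⟨x, hx⟩
    have hle (c : M) (hc : c ∈ A) : colourValue B p c ≤ B a :=
      colourValue_le_of_isMaxOn ha hp hc
    have hlt_a : colourValue B p x < B a := hlt.trans_le (hle z hz)
    refine ⟨a, haA, fun c hc => (hle c hc).trans (le_colourValue B p a),
      fun _ => hlt_a.trans_le (le_colourValue B p a), fun _ => ha, fun _ hx_max => ?_⟩
    exact absurd (hx_max haA) ((le_colourValue B p x).trans_lt hlt_a).not_ge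

end LazyResponse

section CrossBonus

variable {V M : Type*} [Fintype V] {Ep : Finset (V × V)} {β : V → M → ℕ} {s s' : V → M} {i : V}

/-- The payoff that node `i` gets from colour `c` through its bonus and the cross-edges `Ep`. -/
noncomputable def crossBonus (Ep : Finset (V × V)) (β : V → M → ℕ) (s : V → M) (i : V) (c : M) :
    ℕ :=
  (Finset.univ.filter fun j => (j, i) ∈ Ep ∧ s j = c).card + β i c

theorem crossBonus_congr (h : ∀ j, (j, i) ∈ Ep → s j = s' j) :
    crossBonus Ep β s i = crossBonus Ep β s' i := by
  funext c
  unfold crossBonus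
  congr 2
  ext j
  simp +contextual [h]

theorem crossBonus_eq_bonus (h : ∀ j, (j, i) ∉ Ep) : crossBonus Ep β s i = β i := by
  funext c
  simp [crossBonus, h]

theorem crossBonus_le_of_forall {c : M} (h : ∀ j, (j, i) ∈ Ep → s j = c → s' j = c) :
    crossBonus Ep β s i c ≤ crossBonus Ep β s' i c :=
  Nat.add_le_add_right (Finset.card_le_card
    (Finset.monotone_filter_right _ fun j _ hj => ⟨hj.1, h j hj.1 hj.2⟩)) _

variable {c : M} (h : ∀ j, (j, i) ∈ Ep → s' j = s j ∨ s' j = c)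
include h

theorem crossBonus_le_of_recolour : crossBonus Ep β s i c ≤ crossBonus Ep β s' i c :=
  crossBonus_le_of_forall fun j hj hjc => (h j hj).elim (·.trans hjc) id

theorem crossBonus_le_of_recolour_of_ne {z : M} (hz : z ≠ c) :
    crossBonus Ep β s' i z ≤ crossBonus Ep β s i z :=
  crossBonus_le_of_forall fun j hj hjz =>
    (h j hj).elim (·.symm.trans hjz) fun hjc => absurd (hjz.symm.trans hjc) hz

theorem isMaxOn_crossBonus_of_recolour {A : Set M} (hc : IsMaxOn (crossBonus Ep β s i) A c) :
    IsMaxOn (crossBonus Ep β s' i) A c := by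
  refine isMaxOn_iff.2 fun z hz => ?_
  rcases eq_or_ne z c with rfl | hzc
  · exact le_rfl
  · exact (crossBonus_le_of_recolour_of_ne h hzc).trans
      ((hc hz).trans (crossBonus_le_of_recolour h))

end CrossBonus

section PartitionCycle

variable {n k : ℕ} {M : Type} {Ep : Finset (Fin (n + 1) × Fin (n + 1))}
  {β : Fin (n + 1) → M → ℕ} {C : Fin (n + 1) → Finset M} {s s' : Fin (n + 1) → M}
  {i j : Fin (n + 1)}

theorem cycAdj_iff : cycAdj (n + 1) j i ↔ j = i - 1 := by
  rw [cycAdj, eq_sub_iff_add_eq, Fin.ext_iff, Fin.val_add, Fin.val_one', Nat.add_mod_mod]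

theorem pcAdj_iff : pcAdj (n + 1) Ep j i ↔ j = i - 1 ∨ (j, i) ∈ Ep :=
  or_congr_left cycAdj_iff

theorem zero_sub_one_eq_last : (0 : Fin (n + 1)) - 1 = Fin.last n := by
  simp [Fin.ext_iff]

theorem succ_sub_one_eq_castSucc (i : Fin n) : i.succ - 1 = i.castSucc := by
  rw [sub_eq_iff_eq_add, Fin.coeSucc_eq_succ]

namespace IsPartitionCycle

variable (hp : IsPartitionCycle (n + 1) k Ep)
include hp

theorem le_last : k ≤ Fin.last n :=
  Nat.le_of_lt_succ hp.2.1

theorem ne_zero (hi : k ≤ i) : i ≠ 0 :=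
  Fin.val_ne_zero_iff.1 (Nat.one_le_iff_ne_zero.1 (hp.1.trans hi))

theorem source_lt (h : (j, i) ∈ Ep) : (j : ℕ) < k :=
  (hp.2.2.1 _ h).1

theorem le_target (h : (j, i) ∈ Ep) : k ≤ i :=
  (hp.2.2.1 _ h).2

theorem source_lt_target (h : (j, i) ∈ Ep) : j < i :=
  Fin.lt_def.2 ((hp.source_lt h).trans_le (hp.le_target h))

theorem sub_one_notMem : (i - 1, i) ∉ Ep :=
  fun h => hp.2.2.2 _ h (cycAdj_iff.2 rfl)

theorem sub_one_ne (i : Fin (n + 1)) : i - 1 ≠ i := by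
  obtain ⟨hk, hkn, -⟩ := hp
  rw [Ne, Fin.ext_iff, Fin.coe_sub_one]
  split_ifs with hi
  · simp only [hi, Fin.val_zero]
    lia
  · have := Fin.val_ne_zero_iff.2 hi
    lia

theorem crossBonus_of_lt (hi : (i : ℕ) < k) : crossBonus Ep β s i = β i :=
  crossBonus_eq_bonus fun _ h => hi.not_ge (hp.le_target h)

theorem crossBonus_sweepStage : crossBonus Ep β (sweepStage s s' i) i = crossBonus Ep β s' i :=
  crossBonus_congr fun _ h => sweepStage_of_lt (hp.source_lt_target h)

end IsPartitionCycle

/-- The payoff of node `i` in the partition-cycle as a function of its own colour, the colours of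
the other nodes being given by `s`; see `IsPartitionCycle.payoff_update`. -/
noncomputable def nodePayoff (Ep : Finset (Fin (n + 1) × Fin (n + 1))) (β : Fin (n + 1) → M → ℕ)
    (s : Fin (n + 1) → M) (i : Fin (n + 1)) : M → ℕ :=
  colourValue (crossBonus Ep β s i) (s (i - 1))

namespace IsPartitionCycle

variable (hp : IsPartitionCycle (n + 1) k Ep)
include hp

theorem payoff_eq (i : Fin (n + 1)) :
    payoff (pcAdj (n + 1) Ep) (fun _ _ => 1) β s i = nodePayoff Ep β s i (s i) := by
  have hsplit (j : Fin (n + 1)) :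
      (if pcAdj (n + 1) Ep j i ∧ s j = s i then 1 else 0 : ℝ) =
        (if (j, i) ∈ Ep ∧ s j = s i then 1 else 0) +
          if j = i - 1 then if s j = s i then 1 else 0 else 0 := by
    have hdisj : j = i - 1 → (j, i) ∉ Ep := by
      rintro rfl
      exact hp.sub_one_notMem
    rw [pcAdj_iff]
    split_ifs <;> simp_all
  simp only [payoff, Finset.sum_filter, hsplit, Finset.sum_add_distrib, Finset.sum_ite_eq',
    Finset.mem_univ, if_true]
  simp [nodePayoff, colourValue, crossBonus, eq_comm, add_right_comm]

theorem payoff_update (i : Fin (n + 1)) (c : M) :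
    payoff (pcAdj (n + 1) Ep) (fun _ _ => 1) β (Function.update s i c) i =
      nodePayoff Ep β s i c := by
  have hcross : crossBonus Ep β (Function.update s i c) i = crossBonus Ep β s i :=
    crossBonus_congr fun j h => Function.update_of_ne (hp.source_lt_target h).ne c s
  rw [hp.payoff_eq, nodePayoff, hcross, Function.update_of_ne (hp.sub_one_ne i),
    Function.update_self, nodePayoff]

theorem isNash_of_isMaxOn (hs : Valid C s)
    (h : ∀ i, IsMaxOn (nodePayoff Ep β s i) (C i) (s i)) :
    IsNash (pcAdj (n + 1) Ep) (fun _ _ => 1) β C s := by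
  refine isNash_of_payoff_update_le hs fun i c hc => ?_
  rw [hp.payoff_update, hp.payoff_eq]
  exact Nat.cast_le.2 (h i hc)

end IsPartitionCycle

/-- All nodes, except possibly the first one, play a best response. -/
def IsSettled (Ep : Finset (Fin (n + 1) × Fin (n + 1))) (β : Fin (n + 1) → M → ℕ)
    (C : Fin (n + 1) → Finset M) (s : Fin (n + 1) → M) : Prop :=
  ∀ i ≠ 0, IsMaxOn (nodePayoff Ep β s i) (C i) (s i)

/-- All nodes from `b` on play the colour of the last node, and this colour maximises their
bonuses. -/
def IsUniformFrom (Ep : Finset (Fin (n + 1) × Fin (n + 1))) (β : Fin (n + 1) → M → ℕ)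
    (C : Fin (n + 1) → Finset M) (s : Fin (n + 1) → M) (b : Fin (n + 1)) : Prop :=
  ∀ i, b ≤ i → s i = s (Fin.last n) ∧ IsMaxOn (crossBonus Ep β s i) (C i) (s i)

/-- The top nodes whose colour does not have maximal bonus; no cross-edge enters a top node. -/
noncomputable def subBonusTop (k : ℕ) (β : Fin (n + 1) → M → ℕ) (C : Fin (n + 1) → Finset M)
    (s : Fin (n + 1) → M) : Finset (Fin (n + 1)) :=
  {i | (i : ℕ) < k ∧ ¬ IsMaxOn (β i) (C i) (s i)}

theorem mem_subBonusTop :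
    i ∈ subBonusTop k β C s ↔ (i : ℕ) < k ∧ ¬ IsMaxOn (β i) (C i) (s i) := by
  simp [subBonusTop]

theorem card_subBonusTop_le : (subBonusTop k β C s).card ≤ k :=
  calc (subBonusTop k β C s).card
      ≤ (Finset.univ.filter fun i : Fin (n + 1) => (i : ℕ) < k).card :=
        Finset.card_le_card (Finset.monotone_filter_right _ fun _ _ hi => hi.1)
    _ ≤ k := Fin.card_filter_val_lt.trans_le (min_le_right _ _)

/-- The sweep from `s` to `s'` lets every node move, in increasing order, to a lazy response. -/
def IsLazySweep (Ep : Finset (Fin (n + 1) × Fin (n + 1))) (β : Fin (n + 1) → M → ℕ)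
    (C : Fin (n + 1) → Finset M) (s s' : Fin (n + 1) → M) : Prop :=
  ∀ i, IsLazyResponse (crossBonus Ep β (sweepStage s s' i) i) (sweepStage s s' i (i - 1)) (C i)
    (sweepStage s s' i i) (s' i)

theorem IsPartitionCycle.exists_isLazySweep (hp : IsPartitionCycle (n + 1) k Ep)
    (hs : Valid C s) :
    ∃ s', Valid C s' ∧
      ReachesWithin (UniDev (pcAdj (n + 1) Ep) (fun _ _ => 1) β C) (n + 1) s s' ∧
      IsLazySweep Ep β C s s' := by
  refine exists_sweep (P := Valid C) (U := fun t i c =>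
    IsLazyResponse (crossBonus Ep β t i) (t (i - 1)) (C i) (t i) c) (fun t ht i => ?_) hs
  obtain ⟨c, hc⟩ := exists_isLazyResponse (crossBonus Ep β t i) (t (i - 1)) (ht i)
  refine ⟨c, hc, ht.update hc.mem, fun hne => uniDev_update ht hc.mem ?_⟩
  rw [hp.payoff_update, hp.payoff_eq]
  exact Nat.cast_lt.2 (hc.lt_of_ne hne)

namespace IsLazySweep

variable (h : IsLazySweep Ep β C s s')
include h

theorem mem (i : Fin (n + 1)) : s' i ∈ C i :=
  (h i).mem

variable (hp : IsPartitionCycle (n + 1) k Ep)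
include hp

theorem isLazyResponse_zero :
    IsLazyResponse (crossBonus Ep β s' 0) (s (Fin.last n)) (C 0) (s 0) (s' 0) := by
  simpa only [hp.crossBonus_sweepStage, sweepStage_of_le (Fin.zero_le _), zero_sub_one_eq_last]
    using h 0

theorem isLazyResponse_of_ne_zero (hi : i ≠ 0) :
    IsLazyResponse (crossBonus Ep β s' i) (s' (i - 1)) (C i) (s i) (s' i) := by
  simpa only [hp.crossBonus_sweepStage, sweepStage_of_le le_rfl,
    sweepStage_of_lt (Fin.sub_one_lt_iff.2 (Fin.pos_iff_ne_zero.2 hi))] using h i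

theorem isMaxOn_crossBonus_of_ne (hi : s' i ≠ s i) :
    IsMaxOn (crossBonus Ep β s' i) (C i) (s' i) := by
  have hlazy := (h i).isMaxOn_bonus_of_ne
  rw [hp.crossBonus_sweepStage, sweepStage_of_le le_rfl] at hlazy
  exact hlazy hi

theorem isMaxOn_bonus_of_ne (hi : (i : ℕ) < k) (hne : s' i ≠ s i) :
    IsMaxOn (β i) (C i) (s' i) := by
  have hmax := h.isMaxOn_crossBonus_of_ne hp hne
  rwa [hp.crossBonus_of_lt hi] at hmax

theorem isSettled : IsSettled Ep β C s' :=
  fun _ hi => (h.isLazyResponse_of_ne_zero hp hi).isMaxOn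

theorem isNash_of_last_eq (hlast : s' (Fin.last n) = s (Fin.last n)) :
    IsNash (pcAdj (n + 1) Ep) (fun _ _ => 1) β C s' := by
  refine hp.isNash_of_isMaxOn h.mem fun i => ?_
  rcases eq_or_ne i 0 with rfl | hi
  · rw [nodePayoff, zero_sub_one_eq_last, hlast]
    exact (h.isLazyResponse_zero hp).isMaxOn
  · exact h.isSettled hp i hi

theorem isUniformFrom_last (hlast : s' (Fin.last n) ≠ s (Fin.last n)) :
    IsUniformFrom Ep β C s' (Fin.last n) := by
  intro i hi
  obtain rfl := Fin.last_le_iff.1 hi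
  exact ⟨rfl, h.isMaxOn_crossBonus_of_ne hp hlast⟩

theorem subBonusTop_subset : subBonusTop k β C s' ⊆ subBonusTop k β C s := by
  intro i hi
  rw [mem_subBonusTop] at hi ⊢
  refine ⟨hi.1, fun hmax => hi.2 ?_⟩
  by_cases hne : s' i = s i
  · rwa [hne]
  · exact h.isMaxOn_bonus_of_ne hp hi.1 hne

theorem isMaxOn_bonus_of_subBonusTop_eq (hD : subBonusTop k β C s' = subBonusTop k β C s)
    (hi : (i : ℕ) < k) (hne : s' i ≠ s i) : IsMaxOn (β i) (C i) (s i) := by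
  have hnotMem : i ∉ subBonusTop k β C s := fun hmem =>
    (mem_subBonusTop.1 (hD ▸ hmem)).2 (h.isMaxOn_bonus_of_ne hp hi hne)
  exact by_contra fun hmax => hnotMem (mem_subBonusTop.2 ⟨hi, hmax⟩)

theorem apply_sub_one_ne_of_ne (hs : IsSettled Ep β C s) (hi : (i : ℕ) < k) (hi0 : i ≠ 0)
    (hne : s' i ≠ s i) : s' (i - 1) ≠ s (i - 1) := by
  intro hpred
  have hlt := (h.isLazyResponse_of_ne_zero hp hi0).lt_of_ne hne
  have hle := isMaxOn_iff.1 (hs i hi0) _ (h.mem i)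
  rw [hpred, hp.crossBonus_of_lt hi] at hlt
  rw [nodePayoff, hp.crossBonus_of_lt hi] at hle
  exact hlt.not_ge hle

theorem apply_eq_apply_last_of_ne (hs : IsSettled Ep β C s)
    (hD : subBonusTop k β C s' = subBonusTop k β C s) (hi : (i : ℕ) < k) (hne : s' i ≠ s i) :
    s' i = s (Fin.last n) := by
  have hmax : IsMaxOn (crossBonus Ep β s' i) (C i) (s i) := by
    rw [hp.crossBonus_of_lt hi]
    exact h.isMaxOn_bonus_of_subBonusTop_eq hp hD hi hne
  induction i using Fin.induction with
  | zero => exact (h.isLazyResponse_zero hp).eq_pred_of_ne hne hmax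
  | succ i ih =>
    have hcopy := (h.isLazyResponse_of_ne_zero hp i.succ_ne_zero).eq_pred_of_ne hne hmax
    have hpred := h.apply_sub_one_ne_of_ne hp hs hi i.succ_ne_zero hne
    rw [succ_sub_one_eq_castSucc] at hcopy hpred
    have hi' : (i.castSucc : ℕ) < k := (Nat.lt_succ_self _).trans hi
    rw [hcopy]
    refine ih hi' hpred ?_
    rw [hp.crossBonus_of_lt hi']
    exact h.isMaxOn_bonus_of_subBonusTop_eq hp hD hi' hpred

variable {b : Fin (n + 1)} (hkb : k ≤ b) (hb : IsUniformFrom Ep β C s b)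
  (hlast : s' (Fin.last n) ≠ s (Fin.last n))
  (hrecol : ∀ {j : Fin (n + 1)}, (j : ℕ) < k → s' j = s j ∨ s' j = s (Fin.last n))

include hkb hb hlast hrecol

theorem apply_sub_one_eq_apply_last_of_eq (hbi : b ≤ i) (hi : s' i = s' (Fin.last n)) :
    s' (i - 1) = s' (Fin.last n) := by
  have hmax : IsMaxOn (crossBonus Ep β s' i) (C i) (s i) := by
    refine isMaxOn_crossBonus_of_recolour (fun j hj => ?_) (hb i hbi).2
    rw [(hb i hbi).1]
    exact hrecol (hp.source_lt hj)
  have hne : s' i ≠ s i := by rwa [hi, (hb i hbi).1]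
  rw [← (h.isLazyResponse_of_ne_zero hp (hp.ne_zero (hkb.trans hbi))).eq_pred_of_ne hne hmax, hi]

theorem apply_eq_apply_last_of_le (hbi : b ≤ i) : s' i = s' (Fin.last n) := by
  induction i using Fin.reverseInduction with
  | last => rfl
  | cast i ih =>
    have hbi' : b ≤ i.succ := hbi.trans i.castSucc_lt_succ.le
    rw [← succ_sub_one_eq_castSucc]
    exact h.apply_sub_one_eq_apply_last_of_eq hp hkb hb hlast hrecol hbi' (ih hbi')

theorem apply_sub_one_eq_apply_last (hbi : b ≤ i) : s' (i - 1) = s' (Fin.last n) :=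
  h.apply_sub_one_eq_apply_last_of_eq hp hkb hb hlast hrecol hbi
    (h.apply_eq_apply_last_of_le hp hkb hb hlast hrecol hbi)

theorem apply_ne_of_le (hbi : b ≤ i) : s' i ≠ s i := by
  rwa [h.apply_eq_apply_last_of_le hp hkb hb hlast hrecol hbi, (hb i hbi).1]

theorem apply_sub_one_ne (hmem : s b ∈ C b) (hs : IsSettled Ep β C s) : s' (b - 1) ≠ s (b - 1) := by
  intro hpred
  have hcopy : s' b = s (b - 1) := by
    rw [← hpred, h.apply_sub_one_eq_apply_last hp hkb hb hlast hrecol le_rfl,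
      h.apply_eq_apply_last_of_le hp hkb hb hlast hrecol le_rfl]
  have hne := h.apply_ne_of_le hp hkb hb hlast hrecol le_rfl
  have hrecol' (j : Fin (n + 1)) (hj : (j, b) ∈ Ep) : s' j = s j ∨ s' j = s b := by
    rw [(hb b le_rfl).1]
    exact hrecol (hp.source_lt hj)
  have hbest : colourValue (crossBonus Ep β s b) (s (b - 1)) (s' b) ≤
      colourValue (crossBonus Ep β s b) (s (b - 1)) (s b) :=
    hs b (hp.ne_zero hkb) (h.mem b)
  rw [hcopy, colourValue_self, colourValue_of_ne _ (hcopy ▸ hne.symm), ← hcopy] at hbest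
  have hcycle : crossBonus Ep β s b (s b) ≤ crossBonus Ep β s b (s' b) :=
    calc crossBonus Ep β s b (s b)
        ≤ crossBonus Ep β s' b (s b) := crossBonus_le_of_recolour hrecol'
      _ ≤ crossBonus Ep β s' b (s' b) := h.isMaxOn_crossBonus_of_ne hp hne hmem
      _ ≤ crossBonus Ep β s b (s' b) := crossBonus_le_of_recolour_of_ne hrecol' hne
  exact hcycle.not_gt hbest

theorem le_sub_one (hmem : s b ∈ C b) (hs : IsSettled Ep β C s) :
    k ≤ (b - 1 : Fin (n + 1)) := by
  by_contra! hlt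
  have heq := h.apply_sub_one_eq_apply_last hp hkb hb hlast hrecol le_rfl
  rcases hrecol hlt with hstay | hmove
  · exact h.apply_sub_one_ne hp hkb hb hlast hrecol hmem hs hstay
  · exact hlast (heq.symm.trans hmove)

theorem isUniformFrom_sub_one (hmem : s b ∈ C b) (hs : IsSettled Ep β C s) :
    IsUniformFrom Ep β C s' (b - 1) := by
  intro i hi
  by_cases hbi : b ≤ i
  · exact ⟨h.apply_eq_apply_last_of_le hp hkb hb hlast hrecol hbi,
      h.isMaxOn_crossBonus_of_ne hp (h.apply_ne_of_le hp hkb hb hlast hrecol hbi)⟩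
  · obtain rfl : i = b - 1 := by
      have := Fin.val_sub_one_of_ne_zero (hp.ne_zero hkb)
      lia
    exact ⟨h.apply_sub_one_eq_apply_last hp hkb hb hlast hrecol le_rfl,
      h.isMaxOn_crossBonus_of_ne hp (h.apply_sub_one_ne hp hkb hb hlast hrecol hmem hs)⟩

end IsLazySweep

/-- The quantity that drops with every sweep from a settled strategy `s` that is uniform from `b`
on, unless the sweep ends in a Nash equilibrium. A drop in the number of top nodes without
maximal bonus pays for resetting `b` to the last node. -/
noncomputable def potential (k : ℕ) (β : Fin (n + 1) → M → ℕ) (C : Fin (n + 1) → Finset M)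
    (s : Fin (n + 1) → M) (b : Fin (n + 1)) : ℕ :=
  (subBonusTop k β C s).card * (n + 1 - k) + (b - k)

theorem potential_last_lt {m : ℕ} (hk : k ≤ n) (hcard : (subBonusTop k β C s).card < m) :
    potential k β C s (Fin.last n) < m * (n + 1 - k) :=
  calc (subBonusTop k β C s).card * (n + 1 - k) + (n - k)
      < ((subBonusTop k β C s).card + 1) * (n + 1 - k) := by
        rw [Nat.add_one_mul]
        lia
    _ ≤ m * (n + 1 - k) := Nat.mul_le_mul_right _ hcard

theorem IsLazySweep.exists_potential_lt (h : IsLazySweep Ep β C s s')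
    (hp : IsPartitionCycle (n + 1) k Ep) (hlast : s' (Fin.last n) ≠ s (Fin.last n))
    (hs : Valid C s) (hsettled : IsSettled Ep β C s) {b : Fin (n + 1)} (hkb : k ≤ b)
    (hb : IsUniformFrom Ep β C s b) :
    ∃ b' : Fin (n + 1), k ≤ b' ∧ IsUniformFrom Ep β C s' b' ∧
      potential k β C s' b' < potential k β C s b := by
  by_cases hD : subBonusTop k β C s' = subBonusTop k β C s
  · have hrecol {j : Fin (n + 1)} (hj : (j : ℕ) < k) : s' j = s j ∨ s' j = s (Fin.last n) :=
      or_iff_not_imp_left.2 (h.apply_eq_apply_last_of_ne hp hsettled hD hj)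
    have hkb' := h.le_sub_one hp hkb hb hlast hrecol (hs b) hsettled
    refine ⟨b - 1, hkb', h.isUniformFrom_sub_one hp hkb hb hlast hrecol (hs b) hsettled, ?_⟩
    have hval := Fin.val_sub_one_of_ne_zero (hp.ne_zero hkb)
    have hpos := Fin.val_ne_zero_iff.2 (hp.ne_zero hkb)
    rw [potential, potential, hD]
    lia
  · exact ⟨Fin.last n, hp.le_last, h.isUniformFrom_last hp hlast,
      (potential_last_lt hp.le_last (Finset.card_lt_card
        ((h.subBonusTop_subset hp).ssubset_of_ne hD))).trans_le (Nat.le_add_right _ _)⟩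

theorem IsPartitionCycle.exists_isNash_of_potential_lt (hp : IsPartitionCycle (n + 1) k Ep)
    {N : ℕ} (hs : Valid C s) (hsettled : IsSettled Ep β C s) {b : Fin (n + 1)} (hkb : k ≤ b)
    (hb : IsUniformFrom Ep β C s b) (hN : potential k β C s b < N) :
    ∃ s', ReachesWithin (UniDev (pcAdj (n + 1) Ep) (fun _ _ => 1) β C) ((n + 1) * N) s s' ∧
      IsNash (pcAdj (n + 1) Ep) (fun _ _ => 1) β C s' := by
  induction N generalizing s b with
  | zero => exact absurd hN (Nat.not_lt_zero _)
  | succ N ih =>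
    obtain ⟨s', hs', hreach, h⟩ := hp.exists_isLazySweep (β := β) hs
    by_cases hlast : s' (Fin.last n) = s (Fin.last n)
    · exact ⟨s', hreach.mono (Nat.le_mul_of_pos_right _ N.succ_pos),
        h.isNash_of_last_eq hp hlast⟩
    · obtain ⟨b', hkb', hb', hlt⟩ := h.exists_potential_lt hp hlast hs hsettled hkb hb
      obtain ⟨s'', hreach', hnash⟩ := ih hs' (h.isSettled hp) hkb' hb' (by lia)
      exact ⟨s'', (hreach.trans hreach').mono (by rw [Nat.mul_succ, Nat.add_comm]), hnash⟩

theorem IsPartitionCycle.exists_isNash (hp : IsPartitionCycle (n + 1) k Ep) (hs : Valid C s) :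
    ∃ s', ReachesWithin (UniDev (pcAdj (n + 1) Ep) (fun _ _ => 1) β C)
        ((n + 1) * ((k + 1) * (n + 1 - k) + 1)) s s' ∧
      IsNash (pcAdj (n + 1) Ep) (fun _ _ => 1) β C s' := by
  obtain ⟨s', hs', hreach, h⟩ := hp.exists_isLazySweep (β := β) hs
  by_cases hlast : s' (Fin.last n) = s (Fin.last n)
  · exact ⟨s', hreach.mono (Nat.le_mul_of_pos_right _ (Nat.succ_pos _)),
      h.isNash_of_last_eq hp hlast⟩
  · have hpot : potential k β C s' (Fin.last n) < (k + 1) * (n + 1 - k) :=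
      potential_last_lt hp.le_last (Nat.lt_succ_of_le card_subBonusTop_le)
    obtain ⟨s'', hreach', hnash⟩ := hp.exists_isNash_of_potential_lt hs' (h.isSettled hp)
      hp.le_last (h.isUniformFrom_last hp hlast) hpot
    exact ⟨s'', (hreach.trans hreach').mono (by rw [Nat.mul_succ, Nat.add_comm]), hnash⟩

end PartitionCycle

theorem partition_cycle_bonuses_improvement_path_general {n k : ℕ}
    {Ep : Finset (Fin n × Fin n)} (hp : IsPartitionCycle n k Ep) {M : Type}
    (β : Fin n → M → ℕ) {C : Fin n → Finset M} {s : Fin n → M} (hs : Valid C s) :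
    ∃ L ≤ 3 * k * n * (n - k), ImpPath (pcAdj n Ep) (fun _ _ => 1) β C s L := by
  have hk := hp.1
  have hkn := hp.2.1
  obtain ⟨n, rfl⟩ := Nat.exists_eq_add_of_le' (Nat.one_le_of_lt hkn)
  obtain ⟨s', hreach, hnash⟩ := hp.exists_isNash (β := β) hs
  refine (hreach.mono ?_).exists_impPath hnash
  have hd : 1 ≤ n + 1 - k := Nat.sub_pos_of_lt hkn
  have hle : n + 1 - k ≤ k * (n + 1 - k) := Nat.le_mul_of_pos_left _ hk
  calc (n + 1) * ((k + 1) * (n + 1 - k) + 1)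
      ≤ (n + 1) * (3 * (k * (n + 1 - k))) := Nat.mul_le_mul_left _ (by lia)
    _ = 3 * k * (n + 1) * (n + 1 - k) := by ring

/-- There is a constant `c` such that every coordination game with arbitrary
bonuses on an unweighted partition-cycle on `n` nodes with top part of size
`k` admits, from every joint strategy, a finite improvement path of length at
most `c * k * n * (n - k)` ending in a Nash equilibrium. -/
theorem partition_cycle_bonuses_improvement_path :
    ∃ c : ℕ,
      ∀ (n k : ℕ) (Ep : Finset (Fin n × Fin n)),
        IsPartitionCycle n k Ep →
      ∀ (M : Type) [Fintype M],
      ∀ (β : Fin n → M → ℕ),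
      ∀ (C : Fin n → Finset M), (∀ i, (C i).Nonempty) →
      ∀ s : Fin n → M, Valid C s →
        ∃ L, L ≤ c * k * n * (n - k) ∧
          ImpPath (pcAdj n Ep) (fun _ _ => 1) β C s L := by
  exact ⟨3, fun _ _ _ hp _ _ β _ _ _ hs =>
    partition_cycle_bonuses_improvement_path_general hp β hs⟩

end CG
end

section
/- Consider the coordination game without bonuses on the directed graph with nodes {1,2,3,4,5,6}, edges 1 → 2, 2 → 3, 3 → 1 each of weight 2, and edges 4 → 1, 2 → 4, 5 → 2, 3 → 5, 6 → 3, 1 → 6 each of weight 1, with colour sets C(1) = {a, b}, C(2) = {a, c}, C(3) = {b, c}, C(4) = {a}, C(5) = {c}, C(6) = {b} for three distinct colours a, b, c. This graph is a weighted closed chain of three 3-node cycles, and the game has no Nash equilibrium. -/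
open scoped Classical

namespace CG

/-- Adjacency of a chain of `m` cycles, each of `n` nodes: `node j i` is the
`(i+1)`-st node of the `(j+1)`-st cycle (`0`-based indices). -/
def chainAdj {V : Type} (m n : ℕ) (node : ℕ → ℕ → V) : V → V → Prop :=
  fun u v => ∃ j i, j < m ∧ i < n ∧ u = node j i ∧ v = node j ((i + 1) % n)

/-- `node`, `k` describe an open chain of `m ≥ 2` simple cycles, each on `n ≥ 3`
nodes, where consecutive cycles `C_j, C_{j+1}` share exactly the node
`node j 0 = node (j+1) (k j)` (with `1 ≤ k j < n`) and the cycles are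
otherwise pairwise disjoint, and every vertex lies on some cycle. -/
def IsOpenChain {V : Type} (m n : ℕ) (node : ℕ → ℕ → V) (k : ℕ → ℕ) : Prop :=
  2 ≤ m ∧ 3 ≤ n ∧
  (∀ j, j + 1 < m → 1 ≤ k j ∧ k j < n) ∧
  (∀ j, j + 1 < m → node j 0 = node (j + 1) (k j)) ∧
  (∀ j i j' i', j < m → i < n → j' < m → i' < n → node j i = node j' i' →
      (j = j' ∧ i = i') ∨ (j' = j + 1 ∧ i = 0 ∧ i' = k j) ∨
      (j = j' + 1 ∧ i' = 0 ∧ i = k j')) ∧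
  (∀ v : V, ∃ j i, j < m ∧ i < n ∧ node j i = v)

/-- As `IsOpenChain`, but additionally the last cycle shares exactly the node
`node (m-1) 0 = node 0 (k (m-1))` with the first one. -/
def IsClosedChain {V : Type} (m n : ℕ) (node : ℕ → ℕ → V) (k : ℕ → ℕ) : Prop :=
  2 ≤ m ∧ 3 ≤ n ∧
  (∀ j, j < m → 1 ≤ k j ∧ k j < n) ∧
  (∀ j, j + 1 < m → node j 0 = node (j + 1) (k j)) ∧
  node (m - 1) 0 = node 0 (k (m - 1)) ∧
  (∀ j i j' i', j < m → i < n → j' < m → i' < n → node j i = node j' i' →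
      (j = j' ∧ i = i') ∨ (j' = j + 1 ∧ i = 0 ∧ i' = k j) ∨
      (j = j' + 1 ∧ i' = 0 ∧ i = k j') ∨
      (j = m - 1 ∧ j' = 0 ∧ i = 0 ∧ i' = k (m - 1)) ∨
      (j' = m - 1 ∧ j = 0 ∧ i' = 0 ∧ i = k (m - 1))) ∧
  (∀ v : V, ∃ j i, j < m ∧ i < n ∧ node j i = v)

/-- The edge set of Example 5 (`0`-based labels: paper node `i` is `i - 1`):
`1 → 2, 2 → 3, 3 → 1, 4 → 1, 2 → 4, 5 → 2, 3 → 5, 6 → 3, 1 → 6`. -/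
def edgesEx18 : Finset (Fin 6 × Fin 6) :=
  {(0, 1), (1, 2), (2, 0), (3, 0), (1, 3), (4, 1), (2, 4), (5, 2), (0, 5)}

/-- Weights of Example 5: `2` on `1 → 2`, `2 → 3`, `3 → 1`, and `1` elsewhere. -/
noncomputable def weightEx18 : Fin 6 → Fin 6 → ℝ := fun i j =>
  if (i, j) ∈ ({(0, 1), (1, 2), (2, 0)} : Finset (Fin 6 × Fin 6)) then 2 else 1

/-- Colour sets of Example 5: `C(1) = {a,b}`, `C(2) = {a,c}`, `C(3) = {b,c}`,
`C(4) = {a}`, `C(5) = {c}`, `C(6) = {b}`. -/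
def colEx18 {M : Type} [DecidableEq M] (a b c : M) : Fin 6 → Finset M := fun i =>
  if i = 0 then {a, b} else if i = 1 then {a, c} else if i = 2 then {b, c}
    else if i = 3 then {a} else if i = 4 then {c} else {b}

/-! The three core nodes `1, 2, 3` form a cycle of inverters. Core node `i` owns the colour of its
pendant in-neighbour, and its other admissible colour is the one owned by its heavy in-neighbour.
When that neighbour plays its own colour, node `i` best responds by copying it, since the heavy
edge outweighs the pendant one; otherwise the neighbour's colour is unavailable to node `i`, which
then best responds with its own. So in an equilibrium "plays its own colour" would alternate along
a cycle of odd length. -/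

section BestResponse

variable {V M : Type} [Fintype V] {adj : V → V → Prop} {w : V → V → ℝ} {β : V → M → ℕ}
  {C : V → Finset M} {s : V → M} {i p q : V} {x y : M}

/-- Node `i` best responds in `s`: no colour available to `i` yields a larger payoff while the
other nodes keep their colours. A Nash equilibrium is a valid strategy in which every node does. -/
def IsBestResponse [DecidableEq V] (adj : V → V → Prop) (w : V → V → ℝ) (β : V → M → ℕ)
    (C : V → Finset M) (s : V → M) (i : V) : Prop :=
  ∀ d ∈ C i, payoff adj w β (Function.update s i d) i ≤ payoff adj w β s i

theorem payoff_of_two_inNeighbors (hpq : p ≠ q) (hin : ∀ j, adj j i ↔ j = p ∨ j = q) :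
    payoff adj w β s i =
      (if s p = s i then w p i else 0) + (if s q = s i then w q i else 0) + β i (s i) := by
  have hfilter : Finset.univ.filter (fun j => adj j i ∧ s j = s i) =
      ({p, q} : Finset V).filter (fun j => s j = s i) := by
    ext j
    simp [hin]
  rw [payoff, hfilter, Finset.sum_filter, Finset.sum_pair hpq]

theorem payoff_update_of_two_inNeighbors [DecidableEq V] (hpq : p ≠ q)
    (hin : ∀ j, adj j i ↔ j = p ∨ j = q) (hloop : ¬ adj i i) (d : M) :
    payoff adj w β (Function.update s i d) i =
      (if s p = d then w p i else 0) + (if s q = d then w q i else 0) + β i d := by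
  have hp : p ≠ i := fun h => hloop ((hin i).2 (.inl h.symm))
  have hq : q ≠ i := fun h => hloop ((hin i).2 (.inr h.symm))
  simp only [payoff_of_two_inNeighbors hpq hin, Function.update_self, Function.update_of_ne hp,
    Function.update_of_ne hq]

theorem IsBestResponse.eq_iff_heavy_ne [DecidableEq V]
    (hbest : IsBestResponse adj w (fun _ _ => 0) C s i)
    (hin : ∀ j, adj j i ↔ j = p ∨ j = q) (hloop : ¬ adj i i)
    (hpos : 0 < w q i) (hlt : w q i < w p i) (hC : ∀ d, d ∈ C i ↔ d = x ∨ d = y) (hxy : x ≠ y)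
    (hi : s i ∈ C i) (hq : s q = x) (hp : s p ≠ x) :
    s i = x ↔ s p ≠ y := by
  have hpq : p ≠ q := by
    rintro rfl
    exact hp hq
  have hswitch := payoff_update_of_two_inNeighbors (w := w) (β := fun _ _ => 0) (s := s)
    hpq hin hloop
  have hx : payoff adj w (fun _ _ => 0) (Function.update s i x) i = w q i := by
    simp [hswitch, hq, hp]
  have hy : payoff adj w (fun _ _ => 0) (Function.update s i y) i =
      if s p = y then w p i else 0 := by
    simp [hswitch, hq, hxy]
  have hopt : ∀ d ∈ C i, payoff adj w (fun _ _ => 0) (Function.update s i d) i ≤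
      payoff adj w (fun _ _ => 0) (Function.update s i (s i)) i := by
    rwa [Function.update_eq_self]
  rcases (hC _).1 hi with hsi | hsi
  · refine iff_of_true hsi fun hpy => hlt.not_ge ?_
    simpa only [hsi, hx, hy, if_pos hpy] using hopt y ((hC y).2 (.inr rfl))
  · refine iff_of_false (hsi ▸ hxy.symm) fun hpy => hpos.not_ge ?_
    simpa only [hsi, hx, hy, if_neg hpy] using hopt x ((hC x).2 (.inl rfl))

end BestResponse

theorem not_forall_map_iff_not_of_odd {α : Type*} {f : α → α} {P : α → Prop} {n : ℕ} {x : α}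
    (hn : Odd n) (hx : Function.IsPeriodicPt f n x) : ¬ ∀ y, P (f y) ↔ ¬ P y := by
  intro h
  have hsemi : Function.Semiconj P f Not := fun y => propext (h y)
  have hiter : P x = Not^[n] (P x) := by
    rw [← (hsemi.iterate_right n).eq, hx.eq]
  have hnot : Function.Involutive Not := fun p => propext not_not
  rw [hnot.iterate_odd hn] at hiter
  exact iff_not_self hiter.to_iff

section InverterRing

variable {V M : Type} {ι : Type*} {adj : V → V → Prop} {w : V → V → ℝ} {C : V → Finset M}
  {pred : ι → ι} {core pendant : ι → V} {own : ι → M} {s : V → M}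

/-- A ring of inverters inside a coordination game: core node `i` has exactly two in-neighbours,
the core node `pred i` along a heavy edge and a pendant node along a lighter one. The pendant can
only play the colour `own i`, while core node `i` chooses between `own i` and `own (pred i)`.
The order in which the core nodes influence each other is left to the map `pred`. -/
structure IsInverterRing (adj : V → V → Prop) (w : V → V → ℝ) (C : V → Finset M) (pred : ι → ι)
    (core pendant : ι → V) (own : ι → M) : Prop where
  adj_core_iff : ∀ i j, adj j (core i) ↔ j = core (pred i) ∨ j = pendant i
  weight_pendant_pos : ∀ i, 0 < w (pendant i) (core i)
  weight_pendant_lt : ∀ i, w (pendant i) (core i) < w (core (pred i)) (core i)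
  mem_core_iff : ∀ i d, d ∈ C (core i) ↔ d = own i ∨ d = own (pred i)
  mem_pendant_iff : ∀ i d, d ∈ C (pendant i) ↔ d = own i
  own_ne_pred : ∀ i, own i ≠ own (pred i)
  own_ne_pred_pred : ∀ i, own i ≠ own (pred (pred i))

theorem IsInverterRing.own_notMem_core_pred
    (h : IsInverterRing adj w C pred core pendant own) (i : ι) : own i ∉ C (core (pred i)) := by
  rw [h.mem_core_iff, not_or]
  exact ⟨h.own_ne_pred i, h.own_ne_pred_pred i⟩

theorem IsInverterRing.not_adj_self (h : IsInverterRing adj w C pred core pendant own) (i : ι) :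
    ¬ adj (core i) (core i) := by
  rw [h.adj_core_iff]
  rintro (hcore | hpendant)
  · exact h.own_notMem_core_pred i (hcore ▸ (h.mem_core_iff i _).2 (.inl rfl))
  · have hmem : own (pred i) ∈ C (pendant i) := hpendant ▸ (h.mem_core_iff i _).2 (.inr rfl)
    exact h.own_ne_pred i ((h.mem_pendant_iff i _).1 hmem).symm

theorem IsInverterRing.eq_own_iff [Fintype V] [DecidableEq V]
    (h : IsInverterRing adj w C pred core pendant own) (hs : Valid C s) {i : ι}
    (hbest : IsBestResponse adj w (fun _ _ => 0) C s (core i)) :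
    s (core i) = own i ↔ s (core (pred i)) ≠ own (pred i) := by
  have hpred : s (core (pred i)) ≠ own i := fun heq => h.own_notMem_core_pred i (heq ▸ hs _)
  exact hbest.eq_iff_heavy_ne (h.adj_core_iff i) (h.not_adj_self i) (h.weight_pendant_pos i)
    (h.weight_pendant_lt i) (h.mem_core_iff i) (h.own_ne_pred i) (hs _)
    ((h.mem_pendant_iff i _).1 (hs _)) hpred

theorem IsInverterRing.exists_not_isBestResponse [Fintype V] [DecidableEq V]
    (h : IsInverterRing adj w C pred core pendant own) {n : ℕ} {r : ι} (hn : Odd n)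
    (hr : Function.IsPeriodicPt pred n r) (hs : Valid C s) :
    ∃ i, ¬ IsBestResponse adj w (fun _ _ => 0) C s (core i) := by
  by_contra! hbest
  refine not_forall_map_iff_not_of_odd (P := fun i => s (core i) = own i) hn hr fun i => ?_
  rw [h.eq_own_iff hs (hbest i), not_not]

end InverterRing

/-- The nodes `1, 2, 3` of the example. -/
def coreEx18 : Fin 3 → Fin 6 := ![0, 1, 2]

/-- The nodes `4, 5, 6` of the example, listed so that `pendantEx18 i` points to `coreEx18 i`. -/
def pendantEx18 : Fin 3 → Fin 6 := ![3, 4, 5]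

/-- The three triangles of the example: the `j`-th one is `i + 1 → pendant → i → i + 1` for the
core node `i = j mod 3`. -/
def triangleEx18 (j : ℕ) : ℕ → Fin 6
  | 0 => coreEx18 (Fin.ofNat 3 (j + 1))
  | 1 => pendantEx18 (Fin.ofNat 3 j)
  | _ => coreEx18 (Fin.ofNat 3 j)

theorem isClosedChain_triangleEx18 : IsClosedChain 3 3 triangleEx18 (fun _ => 2) := by
  have hshared : ∀ j i j' i' : Fin 3, triangleEx18 j i = triangleEx18 j' i' →
      (j.val = j' ∧ i.val = i') ∨ (j'.val = j + 1 ∧ i.val = 0 ∧ i'.val = 2) ∨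
      (j.val = j' + 1 ∧ i'.val = 0 ∧ i.val = 2) ∨
      (j.val = 2 ∧ j'.val = 0 ∧ i.val = 0 ∧ i'.val = 2) ∨
      (j'.val = 2 ∧ j.val = 0 ∧ i'.val = 0 ∧ i.val = 2) := by decide
  have hcover : ∀ v, ∃ j < 3, ∃ i < 3, triangleEx18 j i = v := by decide
  refine ⟨by decide, le_rfl, fun _ _ => ⟨one_le_two, Nat.lt_succ_self 2⟩, fun _ _ => rfl, rfl, ?_,
    fun v => ?_⟩
  · exact fun j i j' i' hj hi hj' hi' => hshared ⟨j, hj⟩ ⟨i, hi⟩ ⟨j', hj'⟩ ⟨i', hi'⟩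
  · obtain ⟨j, hj, i, hi, hv⟩ := hcover v
    exact ⟨j, i, hj, hi, hv⟩

theorem mem_edgesEx18_iff_chainAdj (u v : Fin 6) :
    (u, v) ∈ edgesEx18 ↔ chainAdj 3 3 triangleEx18 u v := by
  have hedges : ∀ u v, (u, v) ∈ edgesEx18 ↔ ∃ j < 3, ∃ i < 3,
      u = triangleEx18 j i ∧ v = triangleEx18 j ((i + 1) % 3) := by decide
  simp only [hedges, chainAdj, exists_and_left]

theorem isInverterRing_ex18 {M : Type} [DecidableEq M] {a b c : M} (hab : a ≠ b) (hbc : b ≠ c)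
    (hac : a ≠ c) {w : Fin 6 → Fin 6 → ℝ}
    (hpos : ∀ i, 0 < w (pendantEx18 i) (coreEx18 i))
    (hlt : ∀ i, w (pendantEx18 i) (coreEx18 i) < w (coreEx18 (i - 1)) (coreEx18 i)) :
    IsInverterRing (fun u v => (u, v) ∈ edgesEx18) w (colEx18 a b c) (fun i => i - 1)
      coreEx18 pendantEx18 ![a, c, b] where
  adj_core_iff := by decide
  weight_pendant_pos := hpos
  weight_pendant_lt := hlt
  mem_core_iff i d := by fin_cases i <;> simp [colEx18, coreEx18, or_comm]
  mem_pendant_iff i d := by fin_cases i <;> simp [colEx18, pendantEx18]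
  own_ne_pred i := by fin_cases i; exacts [hab, hac.symm, hbc]
  own_ne_pred_pred i := by fin_cases i; exacts [hac, hbc.symm, hab.symm]

theorem closed_chain_weighted_no_nash_general {M : Type} [DecidableEq M] (a b c : M)
    (hab : a ≠ b) (hbc : b ≠ c) (hac : a ≠ c) (w : Fin 6 → Fin 6 → ℝ)
    (hpos : ∀ i, 0 < w (pendantEx18 i) (coreEx18 i))
    (hlt : ∀ i, w (pendantEx18 i) (coreEx18 i) < w (coreEx18 (i - 1)) (coreEx18 i)) :
    (∃ (node : ℕ → ℕ → Fin 6) (k : ℕ → ℕ),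
        IsClosedChain 3 3 node k ∧
        ∀ u v : Fin 6, (u, v) ∈ edgesEx18 ↔ chainAdj 3 3 node u v) ∧
    ∀ s : Fin 6 → M, Valid (colEx18 a b c) s →
      ∃ i : Fin 6, ∃ d ∈ colEx18 a b c i,
        payoff (fun u v => (u, v) ∈ edgesEx18) w (fun _ _ => 0) s i <
          payoff (fun u v => (u, v) ∈ edgesEx18) w (fun _ _ => 0) (Function.update s i d) i := by
  refine ⟨⟨triangleEx18, fun _ => 2, isClosedChain_triangleEx18, mem_edgesEx18_iff_chainAdj⟩,
    fun s hs => ?_⟩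
  have hperiodic : Function.IsPeriodicPt (fun i : Fin 3 => i - 1) 3 0 := by decide
  obtain ⟨i, hi⟩ := (isInverterRing_ex18 hab hbc hac hpos hlt).exists_not_isBestResponse
    (by decide) hperiodic hs
  simp only [IsBestResponse, not_forall, not_le] at hi
  obtain ⟨d, hd, hgain⟩ := hi
  exact ⟨coreEx18 i, d, hd, hgain⟩

/-- The graph of Example 5 is a weighted closed chain of three 3-node cycles,
and the coordination game without bonuses on it (with distinct colours
`a, b, c`) has no Nash equilibrium: in every joint strategy some player can
strictly improve by switching to another of his colours. -/
theorem closed_chain_weighted_no_nash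
    {M : Type} [Fintype M] [DecidableEq M] (a b c : M)
    (hab : a ≠ b) (hbc : b ≠ c) (hac : a ≠ c) :
    (∃ (node : ℕ → ℕ → Fin 6) (k : ℕ → ℕ),
        IsClosedChain 3 3 node k ∧
        ∀ u v : Fin 6, (u, v) ∈ edgesEx18 ↔ chainAdj 3 3 node u v) ∧
    ∀ s : Fin 6 → M, Valid (colEx18 a b c) s →
      ∃ i : Fin 6, ∃ d ∈ colEx18 a b c i,
        payoff (fun u v => (u, v) ∈ edgesEx18) weightEx18 (fun _ _ => 0) s i <
          payoff (fun u v => (u, v) ∈ edgesEx18) weightEx18 (fun _ _ => 0)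
            (Function.update s i d) i := by
  refine closed_chain_weighted_no_nash_general a b c hab hbc hac weightEx18 ?_ ?_ <;>
    intro i <;> fin_cases i <;> simp [weightEx18, coreEx18, pendantEx18]

end CG
end
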